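/- With high probability there do not exist a color i ∈ [q], sets X ⊆ S ⊆ A, T ⊆ B, and Z ⊆ T such that |S|, |T| ≥ βn, |X| = ⌈|S|/log n⌉, |Z| = ⌈γ_b·n/log n⌉ where γ_b = 10·log(e/β)/α_i, and every vertex x ∈ X is c_i-adjacent to at least k = 10·log n/log log n vertices of Z. -/

import Mathlib

open MeasureTheory Filter Finset Asymptotics

/-- Discrete measurable structure on edge states: `none` = non-edge, `some i` = edge of color `cᵢ`. -/
instance (q : ℕ) : MeasurableSpace (Option (Fin q)) := ⊤

/-- Distribution of the state of a single pair: non-edge with probability `1-p`,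
an edge of color `cᵢ` with probability `αᵢ·p`. -/
noncomputable def colorM (q : ℕ) (α : Fin q → ℝ) (p : ℝ) : Measure (Option (Fin q)) :=
  ENNReal.ofReal (1 - p) • Measure.dirac none +
    ∑ i : Fin q, ENNReal.ofReal (α i * p) • Measure.dirac (some i)

/-- The randomly colored random bipartite graph on parts `A = B = Fin n`:
independently, each pair `(a,b)` is a non-edge with probability `1-p` and an
edge of color `cᵢ` with probability `αᵢ·p`.  A sample is a function
`f : Fin n × Fin n → Option (Fin q)`. -/
noncomputable def graphM (n q : ℕ) (α : Fin q → ℝ) (p : ℝ) :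
    Measure (Fin n × Fin n → Option (Fin q)) :=
  Measure.pi fun _ => colorM q α p

/-!
Write `L = log n`, so that `p = O(L / n)`. For a fixed color and fixed `X`, `Z`, the number of
edges of that color between `X` and `Z` is a sum of independent indicators, and it is at least
`k |X|` as soon as every `x ∈ X` has `k` neighbors in `Z`. The exponential Markov inequality with
parameter `t = (log L) / 2` bounds the probability by `exp (p √L |X| |Z| - t k |X|)`. Here
`p |Z| = O(1)` while `t k` has order `L`, so with `|X| ≥ β n / L` the exponent is at most `-c n`.
The sets `X` and `Z` have size of order `n / L`, so there are only
`exp (O(n log L / L)) = exp (o(n))` choices for them, and the union bound tends to zero.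
-/

open ProbabilityTheory

section IndependentEvents

variable {Ω ι V W : Type*} [MeasurableSpace Ω] {μ : Measure Ω}

lemma mgf_indicator_one_le [IsProbabilityMeasure μ] {s : Set Ω} (hs : MeasurableSet s) (t : ℝ) :
    mgf (s.indicator 1) μ t ≤ Real.exp (μ.real s * Real.exp t) := by
  have hpoint (ω : Ω) :
      Real.exp (t * s.indicator 1 ω) ≤ 1 + s.indicator (fun _ ↦ Real.exp t) ω := by
    by_cases hω : ω ∈ s <;> simp [hω]
  have hint : Integrable (s.indicator fun _ ↦ Real.exp t) μ :=
    (integrable_const _).indicator hs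
  calc mgf (s.indicator 1) μ t
      ≤ ∫ ω, (1 + s.indicator (fun _ ↦ Real.exp t) ω) ∂μ :=
        integral_mono_of_nonneg (ae_of_all _ fun _ ↦ (Real.exp_pos _).le)
          ((integrable_const 1).add hint) (ae_of_all _ hpoint)
    _ = μ.real s * Real.exp t + 1 := by
        rw [integral_add (integrable_const 1) hint, integral_indicator_const _ hs]
        simp [add_comm]
    _ ≤ Real.exp (μ.real s * Real.exp t) := Real.add_one_le_exp _

lemma measureReal_le_sum_indicator_le {E : ι → Set Ω} (hE : ∀ e, MeasurableSet (E e))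
    (hind : iIndepSet E μ) {a : ℝ} (ha : ∀ e, μ.real (E e) ≤ a) (J : Finset ι) {t : ℝ}
    (ht : 0 ≤ t) (k : ℝ) :
    μ.real {ω | k ≤ ∑ e ∈ J, (E e).indicator 1 ω} ≤
      Real.exp (#J * (a * Real.exp t) - t * k) := by
  have := hind.isProbabilityMeasure
  have hfun : iIndepFun (fun e ↦ (E e).indicator (1 : Ω → ℝ)) μ := hind.iIndepFun_indicator
  have hmeas (e : ι) : Measurable ((E e).indicator (1 : Ω → ℝ)) :=
    measurable_one.indicator (hE e)
  have hint : Integrable (fun ω ↦ Real.exp (t * (∑ e ∈ J, (E e).indicator 1) ω)) μ :=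
    hfun.integrable_exp_mul_sum hmeas fun e _ ↦
      integrable_exp_mul_of_mem_Icc (a := 0) (b := 1) (hmeas e).aemeasurable <| ae_of_all _ fun ω ↦
        ⟨Set.indicator_nonneg (fun _ _ ↦ zero_le_one) ω,
          Set.indicator_le_self' (fun _ _ ↦ zero_le_one) ω⟩
  have hmgf : mgf (∑ e ∈ J, (E e).indicator 1) μ t ≤ Real.exp (#J * (a * Real.exp t)) := by
    calc mgf (∑ e ∈ J, (E e).indicator 1) μ t
        = ∏ e ∈ J, mgf ((E e).indicator 1) μ t := hfun.mgf_sum hmeas J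
      _ ≤ ∏ _e ∈ J, Real.exp (a * Real.exp t) := by
        refine prod_le_prod (fun _ _ ↦ mgf_nonneg) fun e _ ↦
          (mgf_indicator_one_le (hE e) t).trans ?_
        gcongr
        exact ha e
      _ = Real.exp (#J * (a * Real.exp t)) := by rw [prod_const, ← Real.exp_nat_mul]
  have hmarkov := measure_ge_le_exp_mul_mgf k ht hint
  simp only [Finset.sum_apply] at hmarkov
  calc μ.real {ω | k ≤ ∑ e ∈ J, (E e).indicator 1 ω}
      ≤ Real.exp (-t * k) * Real.exp (#J * (a * Real.exp t)) := hmarkov.trans (by gcongr)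
    _ = Real.exp (#J * (a * Real.exp t) - t * k) := by rw [← Real.exp_add]; ring_nf

/-- The event that the random bipartite graph on parts `V` and `W`, in which `e : V × W` is an
edge on the event `E e`, has at least `x` vertices on the side `V` each with at least `k`
neighbours in a common set of at most `z` vertices of `W`. The degree of `v` into `Z` is encoded
as a sum of indicators. -/
def overloaded (E : V × W → Set Ω) (x z k : ℝ) : Set Ω :=
  {ω | ∃ (X : Finset V) (Z : Finset W), x ≤ #X ∧ #Z ≤ z ∧
    ∀ v ∈ X, k ≤ ∑ b ∈ Z, (E (v, b)).indicator 1 ω}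

lemma measureReal_forall_le_degree_le {E : V × W → Set Ω} (hE : ∀ e, MeasurableSet (E e))
    (hind : iIndepSet E μ) {a : ℝ} (ha : ∀ e, μ.real (E e) ≤ a) {t : ℝ} (ht : 0 ≤ t) (k : ℝ)
    (X : Finset V) (Z : Finset W) :
    μ.real {ω | ∀ v ∈ X, k ≤ ∑ b ∈ Z, (E (v, b)).indicator 1 ω} ≤
      Real.exp (#X * (#Z * a * Real.exp t - t * k)) := by
  have := hind.isProbabilityMeasure
  have hsub : {ω | ∀ v ∈ X, k ≤ ∑ b ∈ Z, (E (v, b)).indicator 1 ω} ⊆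
      {ω | #X * k ≤ ∑ e ∈ X ×ˢ Z, (E e).indicator 1 ω} := by
    intro ω hω
    simpa only [Set.mem_ofPred_eq, sum_product, nsmul_eq_mul] using card_nsmul_le_sum X _ k hω
  refine (measureReal_mono hsub).trans
    ((measureReal_le_sum_indicator_le hE hind ha _ ht _).trans_eq ?_)
  rw [card_product]
  push_cast
  ring_nf

lemma sum_exp_neg_mul_card_le (V : Type*) [Fintype V] (u : ℝ) :
    ∑ X : Finset V, Real.exp (-(u * #X)) ≤ Real.exp (Fintype.card V * Real.exp (-u)) := by
  calc ∑ X : Finset V, Real.exp (-(u * #X))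
      = ∑ X : Finset V, Real.exp (-u) ^ #X * 1 ^ (Fintype.card V - #X) := by
        refine sum_congr rfl fun X _ ↦ ?_
        rw [one_pow, mul_one, ← Real.exp_nat_mul]
        ring_nf
    _ = (Real.exp (-u) + 1) ^ Fintype.card V := Fintype.sum_pow_mul_eq_add_pow V _ 1
    _ ≤ Real.exp (Real.exp (-u)) ^ Fintype.card V := by
        gcongr
        exact Real.add_one_le_exp _
    _ = Real.exp (Fintype.card V * Real.exp (-u)) := (Real.exp_nat_mul _ _).symm

lemma measureReal_forall_le_degree_le_weighted {E : V × W → Set Ω}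
    (hE : ∀ e, MeasurableSet (E e)) (hind : iIndepSet E μ) {a : ℝ} (ha0 : 0 ≤ a)
    (ha : ∀ e, μ.real (E e) ≤ a) {t u x z k : ℝ} (ht : 0 ≤ t) (hu : 0 ≤ u)
    (hk : u + z * a * Real.exp t ≤ t * k) {X : Finset V} {Z : Finset W}
    (hx : x ≤ #X) (hz : #Z ≤ z) :
    μ.real {ω | ∀ v ∈ X, k ≤ ∑ b ∈ Z, (E (v, b)).indicator 1 ω} ≤
      Real.exp (-(u * #X)) * Real.exp (-(u * #Z)) *
        Real.exp (u * z - x * (t * k - (u + z * a * Real.exp t))) := by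
  have hX : x * (t * k - (u + z * a * Real.exp t)) ≤ #X * (t * k - (u + z * a * Real.exp t)) :=
    mul_le_mul_of_nonneg_right hx (sub_nonneg.2 hk)
  have hXZ : #X * (#Z * a * Real.exp t) ≤ #X * (z * a * Real.exp t) := by gcongr
  have hZ : u * #Z ≤ u * z := by gcongr
  refine (measureReal_forall_le_degree_le hE hind ha ht k X Z).trans ?_
  rw [← Real.exp_add, ← Real.exp_add, Real.exp_le_exp]
  linarith

-- The weight `exp (-(u * #X)) * exp (-(u * #Z))` is summable over pairs of sets of any size, so
-- no binomial coefficients are needed.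
lemma measureReal_overloaded_le [Fintype V] [Fintype W] {E : V × W → Set Ω}
    (hE : ∀ e, MeasurableSet (E e)) (hind : iIndepSet E μ) {a : ℝ} (ha0 : 0 ≤ a)
    (ha : ∀ e, μ.real (E e) ≤ a) {t u x z k : ℝ} (ht : 0 ≤ t) (hu : 0 ≤ u)
    (hk : u + z * a * Real.exp t ≤ t * k) :
    μ.real (overloaded E x z k) ≤
      Real.exp ((Fintype.card V + Fintype.card W) * Real.exp (-u) +
        (u * z - x * (t * k - (u + z * a * Real.exp t)))) := by
  have := hind.isProbabilityMeasure
  set B := u * z - x * (t * k - (u + z * a * Real.exp t))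
  let bad (P : Finset V × Finset W) : Set Ω := {ω | x ≤ #P.1 ∧ #P.2 ≤ z ∧
    ∀ v ∈ P.1, k ≤ ∑ b ∈ P.2, (E (v, b)).indicator 1 ω}
  have hbad (P : Finset V × Finset W) :
      μ.real (bad P) ≤ Real.exp (-(u * #P.1)) * Real.exp (-(u * #P.2)) * Real.exp B := by
    by_cases hP : x ≤ #P.1 ∧ #P.2 ≤ z
    · exact (measureReal_mono fun _ h ↦ h.2.2).trans
        (measureReal_forall_le_degree_le_weighted hE hind ha0 ha ht hu hk hP.1 hP.2)
    · have hempty : bad P = ∅ := Set.eq_empty_of_forall_notMem fun _ h ↦ hP ⟨h.1, h.2.1⟩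
      rw [hempty, measureReal_empty]
      positivity
  have hunion : overloaded E x z k ⊆ ⋃ P, bad P :=
    fun _ ⟨X, Z, h⟩ ↦ Set.mem_iUnion.2 ⟨(X, Z), h⟩
  calc μ.real (overloaded E x z k)
      ≤ ∑ P, μ.real (bad P) :=
        (measureReal_mono hunion).trans (measureReal_iUnion_fintype_le bad)
    _ ≤ ∑ P : Finset V × Finset W,
          Real.exp (-(u * #P.1)) * Real.exp (-(u * #P.2)) * Real.exp B :=
        sum_le_sum fun P _ ↦ hbad P
    _ = (∑ X : Finset V, Real.exp (-(u * #X))) * (∑ Z : Finset W, Real.exp (-(u * #Z))) *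
          Real.exp B := by
        rw [← sum_mul, Fintype.sum_prod_type, Fintype.sum_mul_sum]
    _ ≤ Real.exp (Fintype.card V * Real.exp (-u)) * Real.exp (Fintype.card W * Real.exp (-u)) *
          Real.exp B := by
        gcongr <;> exact sum_exp_neg_mul_card_le _ u
    _ = Real.exp ((Fintype.card V + Fintype.card W) * Real.exp (-u) + B) := by
        rw [← Real.exp_add, ← Real.exp_add, add_mul]

end IndependentEvents

lemma tendsto_measure_compl_of_tendsto_zero {ι : Type*} {Ω : ι → Type*} [∀ n, MeasurableSpace (Ω n)]
    {μ : ∀ n, Measure (Ω n)} {l : Filter ι} (hμ : ∀ᶠ n in l, IsProbabilityMeasure (μ n))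
    {s : ∀ n, Set (Ω n)} (hs : Tendsto (fun n ↦ μ n (s n)) l (nhds 0)) :
    Tendsto (fun n ↦ μ n (s n)ᶜ) l (nhds 1) := by
  have hlower : Tendsto (fun n ↦ 1 - μ n (s n)) l (nhds 1) := by
    simpa using ENNReal.Tendsto.sub tendsto_const_nhds hs (Or.inl ENNReal.one_ne_top)
  refine tendsto_of_tendsto_of_tendsto_of_le_of_le' hlower tendsto_const_nhds ?_ ?_
  · filter_upwards [hμ] with n _
    rw [tsub_le_iff_left, ← measure_univ (μ := μ n)]
    exact measure_univ_le_add_compl (s n)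
  · filter_upwards [hμ] with n _ using prob_le_one

section Asymptotics

lemma eventually_const_add_log_add_sqrt_le (A B D : ℝ) {c : ℝ} (hc : 0 < c) :
    ∀ᶠ L : ℝ in atTop, A + B * Real.log L + D * √L ≤ c * L := by
  have hsqrt : Real.sqrt =o[atTop] (id : ℝ → ℝ) := by
    refine isLittleO_of_tendsto' ((eventually_ne_atTop 0).mono fun L hL h ↦ absurd h hL) ?_
    simp only [id, Real.sqrt_div_self]
    exact tendsto_inv_atTop_zero.comp Real.tendsto_sqrt_atTop
  have hsum : (fun L ↦ A + B * Real.log L + D * √L) =o[atTop] (id : ℝ → ℝ) :=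
    ((isLittleO_const_id_atTop A).add (Real.isLittleO_log_id_atTop.const_mul_left B)).add
      (hsqrt.const_mul_left D)
  filter_upwards [hsum.bound hc, eventually_ge_atTop 0] with L hL hL0
  rw [id, Real.norm_of_nonneg hL0] at hL
  exact (Real.le_norm_self _).trans hL

lemma tendsto_log_natCast_atTop : Tendsto (fun n : ℕ ↦ Real.log n) atTop atTop :=
  Real.tendsto_log_atTop.comp tendsto_natCast_atTop_atTop

lemma tendsto_log_natCast_div : Tendsto (fun n : ℕ ↦ Real.log n / n) atTop (nhds 0) :=
  Real.isLittleO_log_id_atTop.tendsto_div_nhds_zero.comp tendsto_natCast_atTop_atTop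

lemma isBigO_log_add_div {w : ℕ → ℝ} (hwo : w =o[atTop] fun n : ℕ ↦ Real.log n) :
    (fun n : ℕ ↦ (Real.log n + w n) / n) =O[atTop] fun n : ℕ ↦ Real.log n / n := by
  simpa only [div_eq_mul_inv] using
    ((isBigO_refl _ _).add hwo.isBigO).mul (isBigO_refl (fun n : ℕ ↦ (n : ℝ)⁻¹) atTop)

lemma eventually_log_add_div_nonneg {w : ℕ → ℝ} (hw : Tendsto w atTop atTop) :
    ∀ᶠ n : ℕ in atTop, 0 ≤ (Real.log n + w n) / n := by
  filter_upwards [hw.eventually_ge_atTop 0] with n hwn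
  exact div_nonneg (add_nonneg (Real.log_natCast_nonneg n) hwn) n.cast_nonneg

lemma log_exp_one_div_nonneg {β : ℝ} (hβ0 : 0 < β) (hβ1 : β ≤ 1) :
    0 ≤ Real.log (Real.exp 1 / β) :=
  Real.log_nonneg ((one_le_div hβ0).2 (hβ1.trans (Real.one_le_exp zero_le_one)))

end Asymptotics

section ColoredGraph

variable {q : ℕ} {α : Fin q → ℝ}

instance (q : ℕ) : DiscreteMeasurableSpace (Option (Fin q)) := ⟨fun _ ↦ trivial⟩

lemma isProbabilityMeasure_colorM (hα : ∀ i, 0 ≤ α i) (hsum : ∑ i, α i = 1) {p : ℝ}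
    (hp0 : 0 ≤ p) (hp1 : p ≤ 1) : IsProbabilityMeasure (colorM q α p) := by
  constructor
  simp only [colorM, Measure.coe_add, Measure.coe_smul, Measure.coe_finsetSum, Pi.add_apply,
    Pi.smul_apply, Finset.sum_apply, measure_univ, smul_eq_mul, mul_one]
  rw [← ENNReal.ofReal_sum_of_nonneg fun i _ ↦ mul_nonneg (hα i) hp0, ← sum_mul, hsum, one_mul,
    ← ENNReal.ofReal_add (sub_nonneg.2 hp1) hp0, sub_add_cancel, ENNReal.ofReal_one]

lemma isProbabilityMeasure_graphM (n : ℕ) (hα : ∀ i, 0 ≤ α i) (hsum : ∑ i, α i = 1) {p : ℝ}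
    (hp0 : 0 ≤ p) (hp1 : p ≤ 1) : IsProbabilityMeasure (graphM n q α p) := by
  have := isProbabilityMeasure_colorM hα hsum hp0 hp1
  unfold graphM
  infer_instance

/-- The event that the pair `e` is an edge of color `cᵢ`. -/
def colorEdge {V W : Type*} (i : Fin q) (e : V × W) : Set (V × W → Option (Fin q)) :=
  (fun f ↦ f e) ⁻¹' {some i}

lemma measurableSet_colorEdge {V W : Type*} (i : Fin q) (e : V × W) :
    MeasurableSet (colorEdge i e) :=
  measurable_pi_apply e (MeasurableSet.of_discrete (α := Option (Fin q)))

lemma iIndepSet_colorEdge (n : ℕ) (hα : ∀ i, 0 ≤ α i) (hsum : ∑ i, α i = 1) {p : ℝ}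
    (hp0 : 0 ≤ p) (hp1 : p ≤ 1) (i : Fin q) : iIndepSet (colorEdge i) (graphM n q α p) := by
  have := isProbabilityMeasure_colorM hα hsum hp0 hp1
  have hind : iIndepFun (fun (e : Fin n × Fin n) (f : Fin n × Fin n → Option (Fin q)) ↦ f e)
      (graphM n q α p) :=
    iIndepFun_pi (X := fun _ ↦ id) fun _ ↦ aemeasurable_id
  exact (iIndepSet_iff_meas_biInter (measurableSet_colorEdge i)).2 fun J ↦
    hind.meas_biInter fun e _ ↦ ⟨{some i}, MeasurableSet.of_discrete, rfl⟩

lemma graphM_real_colorEdge {n : ℕ} (hα : ∀ i, 0 ≤ α i) (hsum : ∑ i, α i = 1) {p : ℝ}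
    (hp0 : 0 ≤ p) (hp1 : p ≤ 1) (i : Fin q) (e : Fin n × Fin n) :
    (graphM n q α p).real (colorEdge i e) = α i * p := by
  have := isProbabilityMeasure_colorM hα hsum hp0 hp1
  have heval : graphM n q α p (colorEdge i e) = colorM q α p {some i} :=
    (measurePreserving_eval (fun _ : Fin n × Fin n ↦ colorM q α p) e).measure_preimage
      MeasurableSet.of_discrete.nullMeasurableSet
  have hcolor : colorM q α p {some i} = ENNReal.ofReal (α i * p) := by
    simp [colorM, Set.indicator_apply]
  rw [measureReal_def, heval, hcolor, ENNReal.toReal_ofReal (mul_nonneg (hα i) hp0)]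

lemma sum_indicator_colorEdge {V W : Type*} (i : Fin q) (f : V × W → Option (Fin q)) (v : V)
    (Z : Finset W) :
    ∑ b ∈ Z, (colorEdge i (v, b)).indicator (1 : (V × W → Option (Fin q)) → ℝ) f =
      #{b ∈ Z | f (v, b) = some i} := by
  classical
  simp [colorEdge, Set.indicator_apply]

lemma graphM_real_overloaded_le {n : ℕ} (hα : ∀ i, 0 ≤ α i) (hsum : ∑ i, α i = 1) {p : ℝ}
    (hp0 : 0 ≤ p) (hp1 : p ≤ 1) (i : Fin q) {β γ κ C L : ℝ} (hn : 0 < n) (hL : 1 < L)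
    (hC : 0 ≤ C) (hp : p ≤ C * (L / n))
    (hk : Real.log L + γ * (α i * C) * √L ≤ κ / 2 * L)
    (hexp : 2 + (γ + β) * Real.log L + β * (γ * (α i * C)) * √L ≤ β * κ / 4 * L) :
    (graphM n q α p).real
        (overloaded (colorEdge i) (β * n / L) (γ * n / L) (κ * L / Real.log L)) ≤
      Real.exp (-(β * κ / 4 * n)) := by
  have hL0 : 0 < L := zero_lt_one.trans hL
  have : (0 : ℝ) < n := Nat.cast_pos.2 hn
  have hlog : 0 < Real.log L := Real.log_pos hL
  have hexp_half : Real.exp (Real.log L / 2) = √L := by rw [Real.exp_half, Real.exp_log hL0]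
  have hmean : γ * n / L * (α i * (C * (L / n))) * √L = γ * (α i * C) * √L := by field_simp
  have htk : Real.log L / 2 * (κ * L / Real.log L) = κ / 2 * L := by field_simp
  have hbound := measureReal_overloaded_le (x := β * n / L) (z := γ * n / L)
    (k := κ * L / Real.log L) (t := Real.log L / 2) (u := Real.log L)
    (a := α i * (C * (L / n))) (measurableSet_colorEdge i)
    (iIndepSet_colorEdge n hα hsum hp0 hp1 i) (by have := hα i; positivity)
    (fun e ↦ (graphM_real_colorEdge hα hsum hp0 hp1 i e).trans_le
      (mul_le_mul_of_nonneg_left hp (hα i)))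
    (by positivity) hlog.le (by rwa [hexp_half, hmean, htk])
  rw [hexp_half, hmean, htk, Real.exp_neg, Real.exp_log hL0, Fintype.card_fin] at hbound
  refine hbound.trans (Real.exp_le_exp.2 ?_)
  calc (n + n) * L⁻¹ + (Real.log L * (γ * n / L) -
          β * n / L * (κ / 2 * L - (Real.log L + γ * (α i * C) * √L)))
      = n / L * (2 + (γ + β) * Real.log L + β * (γ * (α i * C)) * √L - β * κ / 2 * L) := by
        ring
    _ ≤ n / L * (β * κ / 4 * L - β * κ / 2 * L) := by gcongr
    _ = -(β * κ / 4 * n) := by field_simp; ring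

lemma eventually_le_one_of_isBigO_log_div {p : ℕ → ℝ}
    (hp : p =O[atTop] fun n : ℕ ↦ Real.log n / n) : ∀ᶠ n in atTop, p n ≤ 1 :=
  (hp.trans_tendsto tendsto_log_natCast_div).eventually_le_const zero_lt_one

lemma tendsto_graphM_overloaded (hα : ∀ i, 0 ≤ α i) (hsum : ∑ i, α i = 1) {p : ℕ → ℝ}
    (hp0 : ∀ᶠ n in atTop, 0 ≤ p n) (hp : p =O[atTop] fun n : ℕ ↦ Real.log n / n) {β κ : ℝ}
    (hβ : 0 < β) (hκ : 0 < κ) (γ : ℝ) (i : Fin q) :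
    Tendsto (fun n : ℕ ↦ graphM n q α (p n) (overloaded (colorEdge i) (β * n / Real.log n)
      (γ * n / Real.log n) (κ * Real.log n / Real.log (Real.log n)))) atTop (nhds 0) := by
  obtain ⟨C, hC, hpC⟩ := hp.exists_pos
  have hbound : ∀ᶠ n : ℕ in atTop, (graphM n q α (p n)).real
      (overloaded (colorEdge i) (β * n / Real.log n) (γ * n / Real.log n)
        (κ * Real.log n / Real.log (Real.log n))) ≤ Real.exp (-(β * κ / 4 * n)) := by
    filter_upwards [hp0, eventually_le_one_of_isBigO_log_div hp, hpC.bound,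
      eventually_gt_atTop 0, tendsto_log_natCast_atTop.eventually_gt_atTop 1,
      tendsto_log_natCast_atTop.eventually (eventually_const_add_log_add_sqrt_le 0 1
        (γ * (α i * C)) (half_pos hκ)),
      tendsto_log_natCast_atTop.eventually (eventually_const_add_log_add_sqrt_le 2 (γ + β)
        (β * (γ * (α i * C))) (show 0 < β * κ / 4 by positivity))]
      with n hpn0 hpn1 hpn hn hL hk hexp
    have hLn : 0 ≤ Real.log n / n := by positivity
    rw [Real.norm_of_nonneg hpn0, Real.norm_of_nonneg hLn] at hpn
    rw [zero_add, one_mul] at hk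
    exact graphM_real_overloaded_le hα hsum hpn0 hpn1 i hn hL hC.le hpn hk hexp
  have hdecay : Tendsto (fun n : ℕ ↦ Real.exp (-(β * κ / 4 * n))) atTop (nhds 0) :=
    Real.tendsto_exp_neg_atTop_nhds_zero.comp
      (tendsto_natCast_atTop_atTop.const_mul_atTop (by positivity))
  rw [← ENNReal.ofReal_zero]
  refine tendsto_of_tendsto_of_tendsto_of_le_of_le' tendsto_const_nhds
    (ENNReal.tendsto_ofReal hdecay) (by simp) ?_
  filter_upwards [hbound, hp0, eventually_le_one_of_isBigO_log_div hp] with n hn hpn0 hpn1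
  have := isProbabilityMeasure_graphM n hα hsum hpn0 hpn1
  exact (ENNReal.le_ofReal_iff_toReal_le (measure_ne_top _ _) (Real.exp_pos _).le).2 hn

theorem lemma_c_general (hα : ∀ i, 0 ≤ α i) (hsum : ∑ i, α i = 1) {p : ℕ → ℝ}
    (hp0 : ∀ᶠ n in atTop, 0 ≤ p n) (hp : p =O[atTop] fun n : ℕ ↦ Real.log n / n) {β κ : ℝ}
    (hβ : 0 < β) (hκ : 0 < κ) {γ : Fin q → ℝ} (hγ : ∀ i, 0 ≤ γ i) :
    Tendsto (fun n =>
      graphM n q α (p n)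
        {f | ¬ ∃ (i : Fin q) (X S T Z : Finset (Fin n)),
          X ⊆ S ∧ Z ⊆ T ∧ β * n ≤ (S.card : ℝ) ∧ β * n ≤ (T.card : ℝ) ∧
          X.card = ⌈(S.card : ℝ) / Real.log n⌉₊ ∧
          Z.card = ⌈γ i * n / Real.log n⌉₊ ∧
          ∀ x ∈ X, κ * Real.log n / Real.log (Real.log n) ≤
            ((Z.filter fun b => f (x, b) = some i).card : ℝ)})
      atTop (nhds 1) := by
  have hprob : ∀ᶠ n in atTop, IsProbabilityMeasure (graphM n q α (p n)) := by
    filter_upwards [hp0, eventually_le_one_of_isBigO_log_div hp] with n hpn0 hpn1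
    exact isProbabilityMeasure_graphM n hα hsum hpn0 hpn1
  have hsum_tendsto := tendsto_finsetSum univ fun i _ ↦
    tendsto_graphM_overloaded hα hsum hp0 hp hβ hκ (γ i + 1) i
  rw [sum_const_zero] at hsum_tendsto
  refine tendsto_measure_compl_of_tendsto_zero hprob
    (tendsto_of_tendsto_of_tendsto_of_le_of_le' tendsto_const_nhds hsum_tendsto (by simp) ?_)
  filter_upwards [eventually_gt_atTop 0, tendsto_log_natCast_atTop.eventually_gt_atTop 0,
    tendsto_log_natCast_div.eventually_le_const zero_lt_one] with n hn hL hLn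
  refine (measure_mono ?_).trans (measure_iUnion_fintype_le _ _)
  rintro f ⟨i, X, S, T, Z, -, -, hS, -, hX, hZ, hdeg⟩
  refine Set.mem_iUnion.2 ⟨i, X, Z, ?_, ?_, fun x hx ↦ ?_⟩
  · rw [hX]
    exact (div_le_div_of_nonneg_right hS hL.le).trans (Nat.le_ceil _)
  · have hnL : 1 ≤ n / Real.log n := (one_le_div hL).2 ((div_le_one (Nat.cast_pos.2 hn)).1 hLn)
    have hγn : 0 ≤ γ i * n / Real.log n := by have := hγ i; positivity
    calc (#Z : ℝ) ≤ γ i * n / Real.log n + 1 := by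
          rw [hZ]
          exact (Nat.ceil_lt_add_one hγn).le
      _ ≤ γ i * n / Real.log n + n / Real.log n := by gcongr
      _ = (γ i + 1) * n / Real.log n := by ring
  · rw [sum_indicator_colorEdge]
    exact hdeg x hx

end ColoredGraph

/-- Lemma 2(c): with `γ_b = 10 log(e/β)/αᵢ` and `k = 10 log n/log log n`, w.h.p.
there are no color `i` and sets `X ⊆ S ⊆ A`, `Z ⊆ T ⊆ B` with `|S|, |T| ≥ βn`,
`|X| = ⌈|S|/log n⌉`, `|Z| = ⌈γ_b n/log n⌉`, such that every `x ∈ X` is `cᵢ`-adjacent to at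
least `k` vertices of `Z`. -/
theorem lemma_c (q : ℕ) (hq : 1 ≤ q) (α : Fin q → ℝ)
    (hα : ∀ i, 0 < α i) (hsum : ∑ i, α i = 1)
    (β : ℝ) (hβ : 0 < β) (hβq : β < 1 / q)
    (w : ℕ → ℝ) (hw : Tendsto w atTop atTop)
    (hwo : w =o[atTop] fun n => Real.log n) :
    Tendsto (fun n =>
      graphM n q α ((Real.log n + w n) / n)
        {f | ¬ ∃ (i : Fin q) (X S T Z : Finset (Fin n)),
          X ⊆ S ∧ Z ⊆ T ∧ β * n ≤ (S.card : ℝ) ∧ β * n ≤ (T.card : ℝ) ∧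
          X.card = ⌈(S.card : ℝ) / Real.log n⌉₊ ∧
          Z.card = ⌈10 * Real.log (Real.exp 1 / β) / α i * n / Real.log n⌉₊ ∧
          ∀ x ∈ X, 10 * Real.log n / Real.log (Real.log n) ≤
            ((Z.filter fun b => f (x, b) = some i).card : ℝ)})
      atTop (nhds 1) := by
  have hβ1 : β ≤ 1 := hβq.le.trans (div_le_self zero_le_one (Nat.one_le_cast.2 hq))
  exact lemma_c_general (fun i ↦ (hα i).le) hsum (eventually_log_add_div_nonneg hw)
    (isBigO_log_add_div hwo) hβ (by norm_num) fun i ↦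
      div_nonneg (mul_nonneg (by norm_num) (log_exp_one_div_nonneg hβ hβ1)) (hα i).le
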